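/- If m ≡ 3 (mod 6) and m, n ≥ 3, then γ_p^2(f_{n×m}) = 2·⌈(5nm - 9n)/30⌉. -/

import Mathlib

abbrev FlowerVert (n m : ℕ) := ZMod n ⊕ ZMod n × Fin (m - 2)

def flowerRel (n m : ℕ) : FlowerVert n m → FlowerVert n m → Prop
  | Sum.inl i, Sum.inl i' => i' = i + 1
  | Sum.inl i, Sum.inr (i', j) => (i' = i ∧ j.val = 0) ∨ (i = i' + 1 ∧ j.val = m - 3)
  | Sum.inr (i, j), Sum.inr (i', j') => i' = i ∧ j'.val = j.val + 1
  | _, _ => False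

/-- The flower graph `f_{n×m}`. -/
def flowerGraph (n m : ℕ) : SimpleGraph (FlowerVert n m) :=
  SimpleGraph.fromRel (flowerRel n m)

/-- `D` is a paired dominating set of `G`. -/
def IsPairedDominating {V : Type*} (G : SimpleGraph V) (D : Set V) : Prop :=
  (∀ v ∉ D, ∃ u ∈ D, G.Adj u v) ∧
  ∃ M : G.Subgraph, M.verts = D ∧ M.IsMatching

/-- `D` is a `k`-distance paired dominating set of `G`. -/
def IsKDistPairedDominating {V : Type*} (G : SimpleGraph V) (k : ℕ) (D : Set V) : Prop :=
  (∀ v ∉ D, ∃ u ∈ D, G.edist u v ≤ k) ∧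
  ∃ M : G.Subgraph, M.verts = D ∧ M.IsMatching

/-- The paired domination number `γ_p(G)`. -/
noncomputable def pairedDomNum {V : Type*} (G : SimpleGraph V) : ℕ :=
  sInf {c | ∃ D : Set V, IsPairedDominating G D ∧ D.ncard = c}

/-- The `k`-distance paired domination number `γ_p^k(G)`. -/
noncomputable def kDistPairedDomNum {V : Type*} (G : SimpleGraph V) (k : ℕ) : ℕ :=
  sInf {c | ∃ D : Set V, IsKDistPairedDominating G k D ∧ D.ncard = c}

/-- The `k`-distance domination number `γ^k(G)`. -/
noncomputable def kDistDomNum {V : Type*} (G : SimpleGraph V) (k : ℕ) : ℕ :=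
  sInf {c | ∃ D : Set V, (∀ v ∉ D, ∃ u ∈ D, G.edist u v ≤ k) ∧ D.ncard = c}

/-!
Write `m = 6k + 3`; the value to establish is `2 (nk + ⌈n/5⌉)`. Regard the graph as `n` cycles
`u_l, v_{l,0}, …, v_{l,m-3}, u_{l+1}` glued at the rim vertices `u_l`, and count the edges of the
perfect matching of a 2-distance paired dominating set.

*Lower bound.* An edge covers at most six consecutive vertices of a cycle, so each cycle carries at
least `k` matching edges, and at least `k + 1` if one of them lies near the rim. A cycle with only
`k` edges cannot cover all its own `6k + 1` petal vertices, and the missing one must be covered by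
an edge near the rim of a cycle at most two steps away. Hence among any five consecutive cycles one
carries `k + 1` edges.

*Upper bound.* Take a rim edge `u_r u_{r+1}` in about every fifth place, and `k` edges in each
petal, six apart. These cover all of the petal `l` except its first vertex, which is left to the
rim edges; if `u_{l+2}` begins a rim edge, the edges are shifted by one so that the last vertex is
left instead.
-/

open Finset

section Graph

variable {V : Type*} {G : SimpleGraph V}

lemma edist_le_two_iff {u v : V} :
    G.edist u v ≤ 2 ↔ u = v ∨ G.Adj u v ∨ ∃ w, G.Adj u w ∧ G.Adj w v := by
  rw [← not_lt, SimpleGraph.two_lt_edist_iff, ← Set.not_nonempty_iff_eq_empty]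
  simp only [Set.Nonempty, SimpleGraph.mem_commonNeighbors, G.adj_comm v, not_and_or, not_not,
    ne_eq]

lemma edist_le_add_one_of_adj {u v w : V} {d : ℕ∞} (huv : G.edist u v ≤ d) (hvw : G.Adj v w) :
    G.edist u w ≤ d + 1 :=
  SimpleGraph.edist_triangle.trans
    (add_le_add huv (SimpleGraph.edist_eq_one_iff_adj.2 hvw).le)

lemma IsKDistPairedDominating.exists_edist_le {k : ℕ} {D : Set V}
    (hD : IsKDistPairedDominating G k D) (v : V) : ∃ u ∈ D, G.edist u v ≤ k := by
  by_cases hv : v ∈ D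
  · exact ⟨v, hv, by simp⟩
  · exact hD.1 v hv

lemma two_mul_card_edgeSet_of_isMatching [Finite V] {M : G.Subgraph} (hM : M.IsMatching) :
    2 * Nat.card M.coe.edgeSet = M.verts.ncard := by
  classical
  have := Fintype.ofFinite V
  have hdegree (v : M.verts) [Fintype (M.coe.neighborSet v)] : M.coe.degree v = 1 := by
    rw [M.coe_degree]
    exact SimpleGraph.Subgraph.degree_eq_one_iff_existsUnique_adj.2 (hM v.2)
  rw [Nat.card_eq_fintype_card, ← SimpleGraph.edgeFinset_card,
    ← M.coe.sum_degrees_eq_twice_card_edges, Set.ncard_eq_toFinset_card']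
  simp [hdegree, -SimpleGraph.Subgraph.coe_degree]

lemma exists_isMatching_verts_eq_range {ι : Type*} {f : ι × Bool → V} (hf : f.Injective)
    (hadj : ∀ i, G.Adj (f (i, false)) (f (i, true))) :
    ∃ M : G.Subgraph, M.verts = Set.range f ∧ M.IsMatching := by
  refine ⟨⨆ i, G.subgraphOfAdj (hadj i), ?_,
    .iSup (fun i => .subgraphOfAdj (hadj i)) fun i j hij => ?_⟩
  · ext v
    simp [eq_comm]
  · simp [hf.eq_iff, hij.symm]

lemma isKDistPairedDominating_range {ι : Type*} {k : ℕ} {f : ι × Bool → V} (hf : f.Injective)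
    (hadj : ∀ i, G.Adj (f (i, false)) (f (i, true))) (hdom : ∀ v, ∃ a, G.edist (f a) v ≤ k) :
    IsKDistPairedDominating G k (Set.range f) :=
  ⟨fun v _ => Set.exists_range_iff.2 (hdom v), exists_isMatching_verts_eq_range hf hadj⟩

end Graph

/-- `i` and `j` are at distance at most `r` on the cycle `ZMod n`. -/
def CyclicNear {n : ℕ} (r : ℕ) (i j : ZMod n) : Prop :=
  ∃ d : ℤ, d.natAbs ≤ r ∧ j = i + d

namespace CyclicNear

variable {n r s : ℕ} {i j l : ZMod n}

lemma refl (r : ℕ) (i : ZMod n) : CyclicNear r i i :=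
  ⟨0, by simp, by simp⟩

lemma symm (h : CyclicNear r i j) : CyclicNear r j i := by
  obtain ⟨d, hd, rfl⟩ := h
  exact ⟨-d, by simpa using hd, by simp⟩

lemma add_one (i : ZMod n) : CyclicNear 1 i (i + 1) :=
  ⟨1, by simp, by simp⟩

lemma natCast {a b : ℕ} (hab : a ≤ b + r) (hba : b ≤ a + r) : CyclicNear r (a : ZMod n) b :=
  ⟨b - a, by omega, by push_cast; ring⟩

lemma trans (hij : CyclicNear r i j) (hjl : CyclicNear s j l) : CyclicNear (r + s) i l := by
  obtain ⟨d, hd, rfl⟩ := hij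
  obtain ⟨e, he, rfl⟩ := hjl
  exact ⟨d + e, by omega, by push_cast; ring⟩

lemma mono (hrs : r ≤ s) (h : CyclicNear r i j) : CyclicNear s i j := by
  obtain ⟨d, hd, rfl⟩ := h
  exact ⟨d, hd.trans hrs, rfl⟩

open Pointwise in
lemma le_mul_card_of_forall_exists [NeZero n] {B : Finset (ZMod n)}
    (hB : ∀ i, ∃ j ∈ B, CyclicNear r i j) : n ≤ (2 * r + 1) * #B := by
  let offsets : Finset (ZMod n) := (Icc (-r : ℤ) r).image (↑)
  have huniv : (univ : Finset (ZMod n)) ⊆ B - offsets := by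
    intro i _
    obtain ⟨_, hj, d, hd, rfl⟩ := hB i
    exact mem_sub.2 ⟨_, hj, d, mem_image_of_mem _ (mem_Icc.2 (by omega)), by simp⟩
  have hoffsets : #offsets ≤ 2 * r + 1 := card_image_le.trans (by rw [Int.card_Icc]; omega)
  calc n = #(univ : Finset (ZMod n)) := by rw [card_univ, ZMod.card]
    _ ≤ #(B - offsets) := card_le_card huniv
    _ ≤ #B * #offsets := card_sub_le
    _ ≤ (2 * r + 1) * #B := by rw [mul_comm]; gcongr

end CyclicNear

section Adjacency

variable {n m : ℕ}

lemma flowerGraph_adj_inl_add_one (hn : n ≠ 1) (i : ZMod n) :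
    (flowerGraph n m).Adj (Sum.inl i) (Sum.inl (i + 1)) := by
  have := ZMod.nontrivial_iff.2 hn
  simp [flowerGraph, flowerRel]

lemma flowerGraph_adj_inl_first (i : ZMod n) {x : Fin (m - 2)} (hx : x.val = 0) :
    (flowerGraph n m).Adj (Sum.inl i) (Sum.inr (i, x)) := by
  simp [flowerGraph, flowerRel, hx]

lemma flowerGraph_adj_inl_last (i : ZMod n) {x : Fin (m - 2)} (hx : x.val = m - 3) :
    (flowerGraph n m).Adj (Sum.inl (i + 1)) (Sum.inr (i, x)) := by
  simp [flowerGraph, flowerRel, hx]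

lemma flowerGraph_adj_inr_succ (i : ZMod n) {x y : Fin (m - 2)} (hxy : y.val = x.val + 1) :
    (flowerGraph n m).Adj (Sum.inr (i, x)) (Sum.inr (i, y)) := by
  have hne : x ≠ y := by rintro rfl; omega
  simp [flowerGraph, flowerRel, hxy, hne]

lemma edist_inl_inl_le (hn : n ≠ 1) {r : ℕ} {i j : ZMod n} (hij : CyclicNear r i j) :
    (flowerGraph n m).edist (Sum.inl i) (Sum.inl j) ≤ r := by
  have forward (i : ZMod n) (d : ℕ) :
      (flowerGraph n m).edist (Sum.inl i) (Sum.inl (i + d)) ≤ d := by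
    induction d with
    | zero => simp
    | succ d ih =>
      push_cast
      rw [← add_assoc]
      exact edist_le_add_one_of_adj ih (flowerGraph_adj_inl_add_one hn _)
  obtain ⟨d, hd, rfl⟩ := hij
  refine le_trans ?_ (Nat.cast_le.2 hd)
  obtain ⟨d, rfl | rfl⟩ := d.eq_nat_or_neg
  · simpa using forward i d
  · rw [SimpleGraph.edist_comm]
    simpa using forward (i + (-d : ℤ)) d

lemma edist_inr_inr_le (i : ZMod n) {x y : Fin (m - 2)} {d : ℕ} (hxy : x.val ≤ y.val + d)
    (hyx : y.val ≤ x.val + d) :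
    (flowerGraph n m).edist (Sum.inr (i, x)) (Sum.inr (i, y)) ≤ d := by
  induction d generalizing y with
  | zero => simp [Fin.ext (by omega : x.val = y.val)]
  | succ d ih =>
    obtain h | h | h := lt_trichotomy x.val y.val
    · exact edist_le_add_one_of_adj (ih (y := ⟨y - 1, by omega⟩) (by grind) (by grind))
        (flowerGraph_adj_inr_succ i (by grind))
    · simp [Fin.ext h]
    · exact edist_le_add_one_of_adj (ih (y := ⟨y + 1, by omega⟩) (by grind) (by grind))
        (flowerGraph_adj_inr_succ i rfl).symm

lemma edist_inl_first_le_two (hn : n ≠ 1) {i j : ZMod n} (hij : CyclicNear 1 i j)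
    {x : Fin (m - 2)} (hx : x.val = 0) :
    (flowerGraph n m).edist (Sum.inl i) (Sum.inr (j, x)) ≤ 2 :=
  edist_le_add_one_of_adj (d := 1) (by simpa using edist_inl_inl_le hn hij)
    (flowerGraph_adj_inl_first j hx)

lemma edist_inl_last_le_two (hn : n ≠ 1) {i j : ZMod n} (hij : CyclicNear 1 i (j + 1))
    {x : Fin (m - 2)} (hx : x.val = m - 3) :
    (flowerGraph n m).edist (Sum.inl i) (Sum.inr (j, x)) ≤ 2 :=
  edist_le_add_one_of_adj (d := 1) (by simpa using edist_inl_inl_le hn hij)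
    (flowerGraph_adj_inl_last j hx)

end Adjacency

section EdgeLabels

variable {n m : ℕ}

/-- `v` is an endpoint of the `p`-th edge of the `l`-th cycle `u_l, v_{l,0}, …, v_{l,m-3}, u_{l+1}`
of the flower graph. The edges are numbered along this path from `0` to `m - 2`, and the edge
`u_l u_{l+1}` that closes the cycle has number `m - 1`. -/
def IsEndpoint (l : ZMod n) (p : ℕ) : FlowerVert n m → Prop
  | Sum.inl i => (i = l ∧ (p = 0 ∨ p = m - 1)) ∨ (i = l + 1 ∧ (p = m - 2 ∨ p = m - 1))
  | Sum.inr (i, x) => i = l ∧ (p = x.val ∨ p = x.val + 1)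

lemma exists_isEndpoint_of_flowerRel {a b : FlowerVert n m} (h : flowerRel n m a b) :
    ∃ l p, IsEndpoint l p a ∧ IsEndpoint l p b := by
  rcases a, b with ⟨i | ⟨i, x⟩, j | ⟨j, y⟩⟩
  · exact ⟨i, m - 1, by simp [IsEndpoint], by simp_all [IsEndpoint, flowerRel]⟩
  · obtain ⟨rfl, hy⟩ | ⟨rfl, hy⟩ := h
    · exact ⟨j, 0, by simp [IsEndpoint], by simp [IsEndpoint, hy]⟩
    · exact ⟨j, m - 2, by simp [IsEndpoint], ⟨rfl, by omega⟩⟩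
  · exact h.elim
  · obtain ⟨rfl, hy⟩ := h
    exact ⟨j, x + 1, by simp [IsEndpoint], by simp [IsEndpoint, hy]⟩

lemma exists_isEndpoint_of_adj {a b : FlowerVert n m} (h : (flowerGraph n m).Adj a b) :
    ∃ l p, IsEndpoint l p a ∧ IsEndpoint l p b := by
  obtain h | h := ((SimpleGraph.fromRel_adj _ _ _).1 h).2
  · exact exists_isEndpoint_of_flowerRel h
  · obtain ⟨l, p, hb, ha⟩ := exists_isEndpoint_of_flowerRel h
    exact ⟨l, p, ha, hb⟩

lemma IsEndpoint.of_common {l l' : ZMod n} {p p' : ℕ} {v : FlowerVert n m}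
    (h : IsEndpoint l p v) (h' : IsEndpoint l' p' v) :
    (l' = l ∧ p' ≤ p + 1 ∧ p ≤ p' + 1) ∨
      (CyclicNear 1 l l' ∧ (p = 0 ∨ m ≤ p + 2) ∧ (p' = 0 ∨ m ≤ p' + 2)) := by
  rcases v with i | ⟨i, x⟩
  · refine .inr ⟨?_, by obtain h | h := h <;> omega, by obtain h | h := h' <;> omega⟩
    obtain ⟨rfl, _⟩ | ⟨rfl, _⟩ := h <;> obtain ⟨hl, _⟩ | ⟨hl, _⟩ := h'
    · exact hl ▸ .refl 1 _
    · exact hl ▸ (CyclicNear.add_one _).symm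
    · exact hl ▸ .add_one _
    · exact add_right_cancel hl ▸ .refl 1 _
  · obtain ⟨rfl, h⟩ := h
    obtain ⟨rfl, h'⟩ := h'
    exact .inl ⟨rfl, by omega, by omega⟩

/-- What it takes for the `p`-th edge of the `l'`-th cycle to have an endpoint within distance `2`
of `v_{l,x}`: it lies on the `l`-th cycle and is close to `v_{l,x}` there, or both are close to the
rim and the two cycles are at most two steps apart. -/
def Reaches (m : ℕ) (l : ZMod n) (x : ℕ) (l' : ZMod n) (p : ℕ) : Prop :=
  (l' = l ∧ x ≤ p + 2 ∧ p ≤ x + 3) ∨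
    ((x ≤ 1 ∨ m ≤ x + 4) ∧ (p ≤ 1 ∨ m ≤ p + 3) ∧ CyclicNear 2 l l')

lemma reaches_of_edist_le_two {l l' : ZMod n} {x : Fin (m - 2)} {p : ℕ} {w : FlowerVert n m}
    (hw : IsEndpoint l' p w) (h : (flowerGraph n m).edist (Sum.inr (l, x)) w ≤ 2) :
    Reaches m l x l' p := by
  obtain rfl | h | ⟨z, hxz, hzw⟩ := edist_le_two_iff.1 h
  · obtain ⟨rfl, hp⟩ := hw
    exact .inl ⟨rfl, by omega, by omega⟩
  · obtain ⟨l₁, p₁, ⟨rfl, hp₁⟩, hw₁⟩ := exists_isEndpoint_of_adj h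
    obtain ⟨rfl, hp⟩ | ⟨hl, hp⟩ := hw₁.of_common hw
    · exact .inl ⟨rfl, by omega, by omega⟩
    · exact .inr ⟨by omega, by omega, hl.mono one_le_two⟩
  · obtain ⟨l₁, p₁, ⟨rfl, hp₁⟩, hz₁⟩ := exists_isEndpoint_of_adj hxz
    obtain ⟨l₂, p₂, hz₂, hw₂⟩ := exists_isEndpoint_of_adj hzw
    obtain ⟨rfl, h₁₂⟩ | ⟨hl₁₂, h₁₂⟩ := hz₁.of_common hz₂ <;>
      obtain ⟨rfl, h₂⟩ | ⟨hl₂, h₂⟩ := hw₂.of_common hw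
    · exact .inl ⟨rfl, by omega, by omega⟩
    · exact .inr ⟨by omega, by omega, hl₂.mono one_le_two⟩
    · exact .inr ⟨by omega, by omega, hl₁₂.mono one_le_two⟩
    · exact .inr ⟨by omega, by omega, hl₁₂.trans hl₂⟩

end EdgeLabels

section LowerBound

lemma le_card_of_forall_lt_exists_eq {α : Type*} {A : Finset α} (f : α → ℕ) {K : ℕ}
    (h : ∀ j < K, ∃ a ∈ A, f a = j) : K ≤ #A := by
  simpa using card_le_card_of_surjOn (t := range K) f fun j hj => h j (by simpa using hj)

lemma card_mul_add_card_filter_le_sum {α : Type*} [Fintype α] {f : α → ℕ} {k : ℕ}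
    (h : ∀ a, k ≤ f a) : Fintype.card α * k + #{a | k < f a} ≤ ∑ a, f a := by
  calc Fintype.card α * k + #{a | k < f a} = ∑ a, (k + if k < f a then 1 else 0) := by
        simp [sum_add_distrib]
    _ ≤ ∑ a, f a := sum_le_sum fun a _ => by
        have := h a
        split_ifs <;> omega

/-- The matching edges `e`, each being the `pos e`-th edge of the cycle `cycle e`, pass the test
`Reaches` for covering every petal vertex of `f_{n×(6k+3)}`. -/
def ReachesPetals {n : ℕ} {ι : Type*} (k : ℕ) (cycle : ι → ZMod n) (pos : ι → ℕ) : Prop :=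
  ∀ l, ∀ x < 6 * k + 1, ∃ e, Reaches (6 * k + 3) l x (cycle e) (pos e)

variable {n k : ℕ} {ι : Type*} [Fintype ι] {cycle : ι → ZMod n} {pos : ι → ℕ}

/-! Inside its cycle `v_{l,x}` is covered only by the six edges `x - 2, …, x + 3`. In the next three
lemmas the test vertices are spaced six apart, and the map to `ℕ` is constant on each of these
windows, with value the index of the test vertex. -/

lemma le_card_cycle (hcov : ReachesPetals k cycle pos) (l : ZMod n) :
    k ≤ #{e | cycle e = l} := by
  refine le_card_of_forall_lt_exists_eq (fun e => (pos e - 1) / 6) fun j hj => ?_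
  obtain ⟨e, ⟨hl, hpos⟩ | ⟨hx, _⟩⟩ := hcov l (6 * j + 3) (by omega)
  · exact ⟨e, by simpa using hl, by omega⟩
  · omega

lemma lt_card_cycle_of_near_rim (hcov : ReachesPetals k cycle pos) {e₀ : ι}
    (he₀ : pos e₀ ≤ 1 ∨ 6 * k ≤ pos e₀) : k < #{e | cycle e = cycle e₀} := by
  obtain he₀ | he₀ := he₀
  · refine le_card_of_forall_lt_exists_eq (fun e => (pos e + 4) / 6) fun j hj => ?_
    obtain rfl | hj₀ := j.eq_zero_or_pos
    · exact ⟨e₀, by simp, by omega⟩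
    obtain ⟨e, ⟨hl, hpos⟩ | ⟨hx, _⟩⟩ := hcov (cycle e₀) (6 * j - 2) (by omega)
    · exact ⟨e, by simpa using hl, by omega⟩
    · omega
  · refine le_card_of_forall_lt_exists_eq (fun e => min (pos e / 6) k) fun j hj => ?_
    obtain rfl | hjk := (Nat.lt_succ_iff.1 hj).eq_or_lt
    · exact ⟨e₀, by simp, by omega⟩
    obtain ⟨e, ⟨hl, hpos⟩ | ⟨hx, _⟩⟩ := hcov (cycle e₀) (6 * j + 2) (by omega)
    · exact ⟨e, by simpa using hl, by omega⟩
    · omega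

lemma exists_cyclicNear_lt_card_cycle (hcov : ReachesPetals k cycle pos) (l : ZMod n) :
    ∃ l', CyclicNear 2 l l' ∧ k < #{e | cycle e = l'} := by
  by_cases hrim : ∃ e, CyclicNear 2 l (cycle e) ∧ (pos e ≤ 1 ∨ 6 * k ≤ pos e)
  · obtain ⟨e, hnear, he⟩ := hrim
    exact ⟨cycle e, hnear, lt_card_cycle_of_near_rim hcov he⟩
  · refine ⟨l, .refl 2 l, le_card_of_forall_lt_exists_eq (fun e => (pos e + 2) / 6) fun j hj => ?_⟩
    obtain ⟨e, ⟨hl, hpos⟩ | ⟨_, he, hnear⟩⟩ := hcov l (6 * j) (by omega)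
    · exact ⟨e, by simpa using hl, by omega⟩
    · exact absurd ⟨e, hnear, by omega⟩ hrim

lemma le_five_mul_card_of_forall_reaches [NeZero n] (hcov : ReachesPetals k cycle pos) :
    5 * (n * k) + n ≤ 5 * Fintype.card ι := by
  let B : Finset (ZMod n) := {l | k < #{e | cycle e = l}}
  have hB : n ≤ 5 * #B := CyclicNear.le_mul_card_of_forall_exists (r := 2) fun l =>
    let ⟨l', hnear, hl'⟩ := exists_cyclicNear_lt_card_cycle hcov l
    ⟨l', by simpa [B] using hl', hnear⟩
  have hsum : n * k + #B ≤ Fintype.card ι := by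
    rw [← card_univ, card_eq_sum_card_fiberwise (f := cycle) (t := univ) (by simp)]
    simpa only [ZMod.card] using card_mul_add_card_filter_le_sum (le_card_cycle hcov)
  omega

lemma two_mul_le_ncard_of_isKDistPairedDominating [NeZero n] {D : Set (FlowerVert n (6 * k + 3))}
    (hD : IsKDistPairedDominating (flowerGraph n (6 * k + 3)) 2 D) :
    2 * ((n + 4) / 5 + n * k) ≤ D.ncard := by
  classical
  obtain ⟨M, rfl, hM⟩ := hD.2
  have hlabel (e : M.coe.edgeSet) : ∃ l p, ∀ w ∈ e.1, IsEndpoint l p w.1 := by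
    obtain ⟨⟨a, b⟩, he⟩ := e
    obtain ⟨l, p, ha, hb⟩ := exists_isEndpoint_of_adj (M.adj_sub he)
    exact ⟨l, p, by simp [ha, hb]⟩
  choose cycle pos hendpoint using hlabel
  have hcov : ReachesPetals k cycle pos := by
    intro l x hx
    obtain ⟨w, hw, hdist⟩ := hD.exists_edist_le (Sum.inr (l, ⟨x, hx⟩))
    obtain ⟨w', hadj, -⟩ := hM hw
    refine ⟨⟨s(⟨w, hw⟩, ⟨w', M.edge_vert hadj.symm⟩), hadj⟩,
      reaches_of_edist_le_two (x := ⟨x, hx⟩) (hendpoint _ ⟨w, hw⟩ (by simp)) ?_⟩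
    rwa [SimpleGraph.edist_comm]
  have hcard := le_five_mul_card_of_forall_reaches hcov
  have htwo := two_mul_card_edgeSet_of_isMatching hM
  rw [Nat.card_eq_fintype_card] at htwo
  omega

end LowerBound

section UpperBound

/-- The rim positions `r` for which `u_r u_{r+1}` is one of the `⌈n/5⌉` rim edges of the optimal
pairing: every fifth one, the last moved back to `n - 2` if necessary so as not to wrap around. -/
def rimStarts (n : ℕ) : Finset (ZMod n) :=
  (range ((n + 4) / 5)).image fun j => ((min (5 * j) (n - 2) : ℕ) : ZMod n)

variable {n k : ℕ}

lemma add_one_notMem_rimStarts (hn : n ≠ 1) {r : ZMod n} (hr : r ∈ rimStarts n) :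
    r + 1 ∉ rimStarts n := by
  intro hr'
  obtain ⟨i, hi, rfl⟩ := mem_image.1 hr
  obtain ⟨j, hj, hij⟩ := mem_image.1 hr'
  rw [mem_range] at hi hj
  rw [← Nat.cast_succ, ZMod.natCast_eq_natCast_iff', Nat.mod_eq_of_lt (by omega),
    Nat.mod_eq_of_lt (by omega)] at hij
  omega

lemma exists_mem_rimStarts_cyclicNear [NeZero n] (i : ZMod n) :
    ∃ r ∈ rimStarts n, CyclicNear 2 i r := by
  obtain ⟨t, ht, rfl⟩ : ∃ t < n, (t : ZMod n) = i := ⟨i.val, i.val_lt, i.natCast_zmod_val⟩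
  by_cases hj : (t + 2) / 5 < (n + 4) / 5
  · exact ⟨_, mem_image_of_mem _ (mem_range.2 hj), .natCast (by omega) (by omega)⟩
  · refine ⟨0, mem_image.2 ⟨0, mem_range.2 (by omega), by simp⟩, ?_⟩
    simpa using CyclicNear.natCast (n := n) (r := 2) (a := t) (b := n) (by omega) (by omega)

/-- How far the matching edges in the petal `t` of the optimal pairing are shifted towards
`v_{t,0}`. -/
def petalShift (t : ZMod n) : ℕ := if t + 2 ∈ rimStarts n then 1 else 0

lemma petalShift_le_one (t : ZMod n) : petalShift t ≤ 1 := by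
  unfold petalShift
  split_ifs <;> simp

/-- The matched pairs of an optimal 2-distance paired dominating set of `f_{n×(6k+3)}`: one rim
edge for each element of `rimStarts n` and `k` edges in each petal. The Boolean selects the
endpoint. -/
def flowerPairing (n k : ℕ) : (rimStarts n ⊕ ZMod n × Fin k) × Bool → FlowerVert n (6 * k + 3)
  | (Sum.inl r, b) => Sum.inl (r.1 + b.toNat)
  | (Sum.inr (t, j), b) => Sum.inr (t, ⟨6 * j + 3 - petalShift t + b.toNat, by
      have := j.isLt
      have := b.toNat_le
      omega⟩)

lemma flowerPairing_injective (hn : n ≠ 1) : (flowerPairing n k).Injective := by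
  rintro ⟨⟨r, hr⟩ | ⟨t, j⟩, b⟩ ⟨⟨r', hr'⟩ | ⟨t', j'⟩, b'⟩ h
  · have h : r + b.toNat = r' + b'.toNat := Sum.inl_injective h
    cases b <;> cases b' <;> simp only [Bool.toNat_false, Bool.toNat_true, Nat.cast_zero,
      Nat.cast_one, add_zero, add_left_inj] at h <;> subst h
    · rfl
    · exact absurd hr (add_one_notMem_rimStarts hn hr')
    · exact absurd hr' (add_one_notMem_rimStarts hn hr)
    · rfl
  · simp [flowerPairing] at h
  · simp [flowerPairing] at h
  · simp only [flowerPairing, Sum.inr.injEq, Prod.mk.injEq, Fin.mk.injEq] at h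
    obtain ⟨rfl, h⟩ := h
    have hshift := petalShift_le_one t
    have hb := b.toNat_le
    have hb' := b'.toNat_le
    obtain rfl : j = j' := Fin.ext (by omega)
    obtain rfl : b = b' := by cases b <;> cases b' <;> simp_all
    rfl

lemma flowerPairing_adj (hn : n ≠ 1) (i : rimStarts n ⊕ ZMod n × Fin k) :
    (flowerGraph n (6 * k + 3)).Adj (flowerPairing n k (i, false))
      (flowerPairing n k (i, true)) := by
  rcases i with r | ⟨t, j⟩
  · simpa [flowerPairing] using flowerGraph_adj_inl_add_one hn r.1
  · exact flowerGraph_adj_inr_succ t (by simp)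

lemma exists_flowerPairing_eq_inl {r : ZMod n} (hr : r ∈ rimStarts n) :
    ∃ a, flowerPairing n k a = Sum.inl r :=
  ⟨(Sum.inl ⟨r, hr⟩, false), by simp [flowerPairing]⟩

lemma exists_flowerPairing_eq_inl_add_one {r : ZMod n} (hr : r ∈ rimStarts n) :
    ∃ a, flowerPairing n k a = Sum.inl (r + 1) :=
  ⟨(Sum.inl ⟨r, hr⟩, true), by simp [flowerPairing]⟩

lemma exists_flowerPairing_eq_inl_cyclicNear_one [NeZero n] {t : ZMod n}
    (ht : t + 2 ∉ rimStarts n) :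
    ∃ a i, flowerPairing n k a = Sum.inl i ∧ CyclicNear 1 i t := by
  obtain ⟨r, hr, d, hd, rfl⟩ := exists_mem_rimStarts_cyclicNear t
  have hd₂ : d ≠ 2 := by rintro rfl; exact ht (by simpa using hr)
  by_cases hd₀ : d = -2
  · obtain ⟨a, ha⟩ := exists_flowerPairing_eq_inl_add_one (k := k) hr
    exact ⟨a, _, ha, 1, by simp, by subst hd₀; push_cast; ring⟩
  · obtain ⟨a, ha⟩ := exists_flowerPairing_eq_inl (k := k) hr
    exact ⟨a, _, ha, CyclicNear.symm ⟨d, by omega, rfl⟩⟩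

lemma exists_flowerPairing_edist_inl_le_two [NeZero n] (hn : n ≠ 1) (i : ZMod n) :
    ∃ a, (flowerGraph n (6 * k + 3)).edist (flowerPairing n k a) (Sum.inl i) ≤ 2 := by
  obtain ⟨r, hr, hnear⟩ := exists_mem_rimStarts_cyclicNear i
  obtain ⟨a, ha⟩ := exists_flowerPairing_eq_inl (k := k) hr
  exact ⟨a, ha ▸ edist_inl_inl_le hn hnear.symm⟩

/-- In terms of the shifted index `x + petalShift t`, the `j`-th edge of the petal joins `6j + 3` to
`6j + 4` and hence covers `6j + 1, …, 6j + 6`. -/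
lemma exists_flowerPairing_edist_inr_le_two (t : ZMod n) {x : Fin (6 * k + 3 - 2)}
    (hpos : 0 < x + petalShift t) (hle : x + petalShift t ≤ 6 * k) :
    ∃ a, (flowerGraph n (6 * k + 3)).edist (flowerPairing n k a) (Sum.inr (t, x)) ≤ 2 := by
  let z := x + petalShift t - 1
  let b : Bool := decide (3 ≤ z % 6)
  have hb : b.toNat = if 3 ≤ z % 6 then 1 else 0 := by
    split_ifs with h <;> simp [b, h]
  have hshift := petalShift_le_one t
  refine ⟨(Sum.inr (t, ⟨z / 6, by omega⟩), b), edist_inr_inr_le t ?_ ?_⟩ <;>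
    simp only [hb] <;> split_ifs <;> omega

lemma exists_flowerPairing_edist_le_two [NeZero n] (hn : n ≠ 1) (v : FlowerVert n (6 * k + 3)) :
    ∃ a, (flowerGraph n (6 * k + 3)).edist (flowerPairing n k a) v ≤ 2 := by
  rcases v with i | ⟨t, x⟩
  · exact exists_flowerPairing_edist_inl_le_two hn i
  have hx := x.isLt
  by_cases ht : t + 2 ∈ rimStarts n
  · have hshift : petalShift t = 1 := if_pos ht
    obtain hlast | hlast := eq_or_ne x.val (6 * k)
    · obtain ⟨a, ha⟩ := exists_flowerPairing_eq_inl (k := k) ht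
      have hnear : CyclicNear 1 (t + 2) (t + 1) := ⟨-1, by simp, by push_cast; ring⟩
      exact ⟨a, ha ▸ edist_inl_last_le_two hn hnear hlast⟩
    · exact exists_flowerPairing_edist_inr_le_two t (by omega) (by omega)
  · have hshift : petalShift t = 0 := if_neg ht
    obtain hfirst | hfirst := eq_or_ne x.val 0
    · obtain ⟨a, i, ha, hnear⟩ := exists_flowerPairing_eq_inl_cyclicNear_one (k := k) ht
      exact ⟨a, ha ▸ edist_inl_first_le_two hn hnear hfirst⟩
    · exact exists_flowerPairing_edist_inr_le_two t (by omega) (by omega)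

lemma exists_isKDistPairedDominating_ncard_le [NeZero n] (hn : n ≠ 1) (k : ℕ) :
    ∃ D, IsKDistPairedDominating (flowerGraph n (6 * k + 3)) 2 D ∧
      D.ncard ≤ 2 * ((n + 4) / 5 + n * k) := by
  refine ⟨_, isKDistPairedDominating_range (flowerPairing_injective hn) (flowerPairing_adj hn)
    (exists_flowerPairing_edist_le_two hn), ?_⟩
  have hstarts : #(rimStarts n) ≤ (n + 4) / 5 := card_image_le.trans (card_range _).le
  have hcard : (Set.range (flowerPairing n k)).ncard = (#(rimStarts n) + n * k) * 2 := by
    rw [Set.ncard_range_of_injective (flowerPairing_injective hn)]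
    simp
  omega

end UpperBound

theorem kDistPairedDomNum_flowerGraph_two {n : ℕ} [NeZero n] (hn : n ≠ 1) (k : ℕ) :
    kDistPairedDomNum (flowerGraph n (6 * k + 3)) 2 = 2 * ((n + 4) / 5 + n * k) := by
  obtain ⟨D, hD, hcard⟩ := exists_isKDistPairedDominating_ncard_le hn k
  rw [kDistPairedDomNum]
  apply le_antisymm
  · refine le_trans (Nat.sInf_le ?_) hcard
    exact ⟨D, hD, rfl⟩
  · refine le_csInf ⟨_, D, hD, rfl⟩ ?_
    rintro _ ⟨D', hD', rfl⟩
    exact two_mul_le_ncard_of_isKDistPairedDominating hD'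

lemma ceil_natCast_div_five (n : ℕ) : ⌈(n : ℚ) / 5⌉ = ((n + 4) / 5 : ℕ) := by
  have := Rat.ceil_natCast_div_natCast n 5
  push_cast at this
  omega

theorem flower_twoDistPairedDomNum_mod6_3 (n m : ℕ) (hn : 3 ≤ n) (hm : 3 ≤ m)
    (h : m % 6 = 3) :
    (kDistPairedDomNum (flowerGraph n m) 2 : ℤ) = 2 * ⌈(5 * (n : ℚ) * m - 9 * n) / 30⌉ := by
  have : NeZero n := ⟨by omega⟩
  obtain ⟨k, rfl⟩ : ∃ k, m = 6 * k + 3 := ⟨m / 6, by omega⟩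
  have hvalue : (5 * (n : ℚ) * (6 * k + 3 : ℕ) - 9 * n) / 30 = (n * k : ℕ) + n / 5 := by
    push_cast
    ring
  rw [kDistPairedDomNum_flowerGraph_two (by omega), hvalue, Int.ceil_natCast_add,
    ceil_natCast_div_five]
  push_cast
  ring
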